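/- (Cauchy-type identity) For any w ∈ S_n, the double β-Grothendieck polynomials satisfy G^β_w(x; ⊖t) = ∑_{v ∈ S_n} G^β_v(x; ⊖z) · ∂̄^β_v G^β_w(z; ⊖t), as an identity of rational functions in the variables x = (x_1,…,x_n), z = (z_1,…,z_n), t = (t_1,…,t_n) and β, where ∂̄^β_v acts on the z-variables. -/

import Mathlib

noncomputable section
open scoped BigOperators

variable {F : Type*}

/-- `x ⊖ y := (x - y)/(1 + β·y)`. -/
def om [Field F] (β x y : F) : F := (x - y) / (1 + β * y)

/-- `⊖ t := -t/(1 + β·t)`. -/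
def negOm [Field F] (β t : F) : F := (-t) / (1 + β * t)

/-- The R-matrix `R^{(n)}(x,y)` on `V ⊗ V`, `V = F^n`, with entries
`R_{ij,kl} = (1 + [k<l]·β(x⊖y)) δ_{il} δ_{jk} + [k>l]·(x⊖y) δ_{ik} δ_{jl}`;
the row index is the pair `(i,j)`, the column index is the pair `(k,l)`. -/
def Rmat [Field F] (n : ℕ) (β x y : F) :
    Matrix (Fin n × Fin n) (Fin n × Fin n) F := Matrix.of fun p q =>
  (if p.1 = q.2 ∧ p.2 = q.1 then (if q.1 < q.2 then 1 + β * om β x y else 1) else 0) +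
  (if p.1 = q.1 ∧ p.2 = q.2 ∧ q.2 < q.1 then om β x y else 0)

/-- The Coxeter length of a permutation: its number of inversions. -/
def permLength {N : ℕ} (w : Equiv.Perm (Fin N)) : ℕ :=
  (Finset.univ.filter fun p : Fin N × Fin N => p.1 < p.2 ∧ w p.2 < w p.1).card

/-- The longest permutation `ω_N : i ↦ N - 1 - i`. -/
def omegaPerm (N : ℕ) : Equiv.Perm (Fin N) :=
  ⟨Fin.rev, Fin.rev, fun i => Fin.rev_rev i, fun i => Fin.rev_rev i⟩

/-- `IsGroth M β G` says that the family `G`, indexed by `S_{M+1}`, satisfies the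
defining recursion of the double β-Grothendieck polynomials:
`G_{ω}(x;y) = ∏_{i+j ≤ M+1} (x_i + y_j + β x_i y_j)` (1-based indices), and
`G_{w s_i}(x;y) = ∂^β_i G_w(x;y)` whenever `ℓ(w s_i) = ℓ(w) - 1`
(the β-divided difference acting on the x-variables). -/
def IsGroth [Field F] (M : ℕ) (β : F)
    (G : Equiv.Perm (Fin (M + 1)) → (Fin (M + 1) → F) → (Fin (M + 1) → F) → F) : Prop :=
  (∀ x y : Fin (M + 1) → F,
      G (omegaPerm (M + 1)) x y =
        ∏ p ∈ Finset.univ.filter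
            (fun p : Fin (M + 1) × Fin (M + 1) => (p.1 : ℕ) + (p.2 : ℕ) + 2 ≤ M + 1),
          (x p.1 + y p.2 + β * x p.1 * y p.2)) ∧
  (∀ (w : Equiv.Perm (Fin (M + 1))) (i : Fin M) (x y : Fin (M + 1) → F),
      permLength (w * Equiv.swap i.castSucc i.succ) + 1 = permLength w →
      x i.castSucc ≠ x i.succ →
      G (w * Equiv.swap i.castSucc i.succ) x y =
        ((1 + β * x i.succ) * G w x y -
            (1 + β * x i.castSucc) * G w (fun j => x (Equiv.swap i.castSucc i.succ j)) y) /
          (x i.castSucc - x i.succ))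

/-- The operator `∂̄^β_i = ∂^β_i + β`, acting on functions of `M+1` variables
in the pair of variables with indices `i, i+1`. -/
def ddbar [Field F] {M : ℕ} (β : F) (i : Fin M) (f : (Fin (M + 1) → F) → F) :
    (Fin (M + 1) → F) → F := fun z =>
  ((1 + β * z i.succ) * f z -
      (1 + β * z i.castSucc) * f (fun j => z (Equiv.swap i.castSucc i.succ j))) /
    (z i.castSucc - z i.succ) + β * f z

/-- `∂̄^β_{i_1} ∂̄^β_{i_2} ⋯ ∂̄^β_{i_ℓ}` for a word `L = [i_1, …, i_ℓ]`. -/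
def ddbarWord [Field F] {M : ℕ} (β : F) (L : List (Fin M)) (f : (Fin (M + 1) → F) → F) :
    (Fin (M + 1) → F) → F :=
  L.foldr (ddbar β) f

/-- `L = [i_1, …, i_ℓ]` is a reduced word for `v`, i.e. `v = s_{i_1} ⋯ s_{i_ℓ}`
with `ℓ = ℓ(v)`. -/
def IsReducedWord {M : ℕ} (L : List (Fin M)) (v : Equiv.Perm (Fin (M + 1))) : Prop :=
  (L.map fun i => Equiv.swap (Fin.castSucc i) (Fin.succ i)).prod = v ∧ L.length = permLength v

/-!
For fixed `z`, the `n!` functions `G_w(·; ⊖z)` lie in the space of polynomials of degree at most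
`n - j` in `x_j`, because `∂^β_i` preserves that space, and its dimension is at most `n!`.
Downward induction from `ω_n` shows that `G_w(z_{u(1)}, …, z_{u(n)}; ⊖z)` vanishes for `u ≠ w`
with `ℓ(u) ≤ ℓ(w)` and is a product over inversions for `u = w`; in particular
`G_w(z; ⊖z) = δ_{w,1}`. As `∂̄^β_i = ∂^β_i + β` sends `G_w` to `G_{w s_i} + β G_w` if `i` is a
descent of `w` and to `0` otherwise, the functionals `f ↦ (∂̄^β_v f)(z)` are dual to the
`G_w(·; ⊖z)`. These are therefore linearly independent, hence a basis of the space, and the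
identity is the expansion of `G_w(·; y)` in this basis.
-/

open Equiv Finset

section Descents

variable {M : ℕ}

/-- The simple transposition `s_i`. -/
abbrev adjSwap (i : Fin M) : Perm (Fin (M + 1)) := swap i.castSucc i.succ

/-- `i` is a right descent of `w`, that is, `w s_i` is shorter than `w`. -/
def IsDescent (w : Perm (Fin (M + 1))) (i : Fin M) : Prop := w i.succ < w i.castSucc

/-- The inversions of `w`, recorded by values and not by positions: with this convention,
multiplying `w` on the right by a simple transposition adds or removes a single pair. -/
def valueInversions {N : ℕ} (w : Perm (Fin N)) : Finset (Fin N × Fin N) :=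
  univ.filter fun p => p.1 < p.2 ∧ w⁻¹ p.2 < w⁻¹ p.1

theorem mem_valueInversions_apply {N : ℕ} {w : Perm (Fin N)} {a b : Fin N} :
    (w a, w b) ∈ valueInversions w ↔ w a < w b ∧ b < a := by
  simp [valueInversions]

theorem card_valueInversions {N : ℕ} (w : Perm (Fin N)) :
    (valueInversions w).card = permLength w := by
  refine card_bij' (fun p _ => (w⁻¹ p.2, w⁻¹ p.1)) (fun p _ => (w p.2, w p.1)) ?_ ?_ ?_ ?_ <;>
    simp +contextual [valueInversions]

theorem valueInversions_one {N : ℕ} : valueInversions (1 : Perm (Fin N)) = ∅ := by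
  simpa [valueInversions, filter_eq_empty_iff] using fun _ _ => le_of_lt

theorem mem_valueInversions_omegaPerm {N : ℕ} {p : Fin N × Fin N} :
    p ∈ valueInversions (omegaPerm N) ↔ p.1 < p.2 :=
  mem_filter_univ p |>.trans (and_iff_left_of_imp Fin.rev_lt_rev.2)

theorem permLength_one {N : ℕ} : permLength (1 : Perm (Fin N)) = 0 := by
  rw [← card_valueInversions, valueInversions_one, card_empty]

theorem mul_adjSwap_mul_adjSwap (w : Perm (Fin (M + 1))) (i : Fin M) :
    w * adjSwap i * adjSwap i = w := by
  rw [mul_assoc, swap_mul_self, mul_one]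

theorem isDescent_mul_adjSwap {w : Perm (Fin (M + 1))} {i : Fin M} :
    IsDescent (w * adjSwap i) i ↔ ¬ IsDescent w i := by
  have hne : w i.castSucc ≠ w i.succ := w.injective.ne i.castSucc_lt_succ.ne
  simp [IsDescent, le_iff_lt_or_eq, hne]

theorem adjSwap_lt_adjSwap {i : Fin M} {a b : Fin (M + 1)} :
    adjSwap i b < adjSwap i a ↔
      (a = i.castSucc ∧ b = i.succ) ∨ (b < a ∧ ¬ (b = i.castSucc ∧ a = i.succ)) := by
  simp only [swap_apply_def, Fin.lt_def, Fin.ext_iff]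
  split_ifs <;> simp_all <;> omega

theorem valueInversions_mul_adjSwap {w : Perm (Fin (M + 1))} {i : Fin M} (h : ¬ IsDescent w i) :
    valueInversions (w * adjSwap i) =
      insert (w i.castSucc, w i.succ) (valueInversions w) := by
  have hlt : w i.castSucc < w i.succ := by simpa [IsDescent] using isDescent_mul_adjSwap.2 h
  ext ⟨p, q⟩
  obtain ⟨a, rfl⟩ := (w * adjSwap i).surjective p
  obtain ⟨b, rfl⟩ := (w * adjSwap i).surjective q
  rw [mem_valueInversions_apply, Perm.mul_apply, Perm.mul_apply, mem_insert,
    mem_valueInversions_apply, adjSwap_lt_adjSwap, Prod.mk.injEq, w.apply_eq_iff_eq,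
    w.apply_eq_iff_eq, swap_apply_eq_iff, swap_apply_eq_iff, swap_apply_left, swap_apply_right]
  constructor
  · rintro ⟨hw, hba⟩
    by_cases hab : a = i.succ ∧ b = i.castSucc
    · exact .inl hab
    · exact .inr ⟨hw, .inr ⟨hba, fun h => hab h.symm⟩⟩
  · rintro (⟨rfl, rfl⟩ | ⟨hw, ⟨rfl, rfl⟩ | ⟨hba, -⟩⟩)
    · simpa using hlt
    · simp only [swap_apply_left, swap_apply_right] at hw
      exact absurd hw hlt.asymm
    · exact ⟨hw, hba⟩

theorem notMem_valueInversions (w : Perm (Fin (M + 1))) (i : Fin M) :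
    (w i.castSucc, w i.succ) ∉ valueInversions w := by
  rw [mem_valueInversions_apply]
  exact fun h => h.2.asymm i.castSucc_lt_succ

theorem permLength_mul_adjSwap {w : Perm (Fin (M + 1))} {i : Fin M} (h : ¬ IsDescent w i) :
    permLength (w * adjSwap i) = permLength w + 1 := by
  rw [← card_valueInversions, valueInversions_mul_adjSwap h,
    card_insert_of_notMem (notMem_valueInversions w i), card_valueInversions]

theorem IsDescent.permLength_mul_adjSwap_add_one {w : Perm (Fin (M + 1))} {i : Fin M}
    (h : IsDescent w i) : permLength (w * adjSwap i) + 1 = permLength w := by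
  rw [← permLength_mul_adjSwap (mt isDescent_mul_adjSwap.1 (not_not.2 h)),
    mul_adjSwap_mul_adjSwap]

theorem permLength_mul_adjSwap_le (w : Perm (Fin (M + 1))) (i : Fin M) :
    permLength (w * adjSwap i) ≤ permLength w + 1 := by
  by_cases h : IsDescent w i
  · have := h.permLength_mul_adjSwap_add_one
    omega
  · exact (permLength_mul_adjSwap h).le

theorem eq_omegaPerm_of_forall_isDescent {w : Perm (Fin (M + 1))} (h : ∀ i, IsDescent w i) :
    w = omegaPerm (M + 1) := by
  have hmono : StrictMono (Fin.rev ∘ w) := Fin.rev_strictAnti.comp (Fin.strictAnti_iff_succ_lt.2 h)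
  ext1 j
  exact Fin.rev_eq_iff.1 (congrFun hmono.eq_id j)

theorem eq_omegaPerm_of_forall_le_add {u : Perm (Fin (M + 1))}
    (h : ∀ j : Fin (M + 1), M ≤ (u j : ℕ) + j) : u = omegaPerm (M + 1) := by
  have hsum : ∑ _j : Fin (M + 1), M = ∑ j : Fin (M + 1), ((u j : ℕ) + j) := by
    rw [sum_add_distrib, Equiv.sum_comp u (fun j : Fin (M + 1) => (j : ℕ)),
      Fin.sum_univ_eq_sum_range (fun j => j), ← mul_two, sum_range_id_mul_two]
    simp
  ext j
  have hj := (sum_eq_sum_iff_of_le fun j _ => h j).1 hsum j (mem_univ j)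
  simp only [omegaPerm, coe_fn_mk, Fin.val_rev]
  omega

theorem perm_induction_from_omegaPerm {P : Perm (Fin (M + 1)) → Prop}
    (omega : P (omegaPerm (M + 1)))
    (mul_adjSwap : ∀ w i, IsDescent w i → P w → P (w * adjSwap i)) (w : Perm (Fin (M + 1))) :
    P w := by
  by_cases hall : ∀ i, IsDescent w i
  · exact eq_omegaPerm_of_forall_isDescent hall ▸ omega
  · obtain ⟨i, hi⟩ := not_forall.1 hall
    rw [← mul_adjSwap_mul_adjSwap w i]
    exact mul_adjSwap _ i (isDescent_mul_adjSwap.2 hi)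
      (perm_induction_from_omegaPerm omega mul_adjSwap (w * adjSwap i))
termination_by Fintype.card (Fin (M + 1) × Fin (M + 1)) - permLength w
decreasing_by
  have hlen := permLength_mul_adjSwap hi
  have hbound : permLength (w * adjSwap i) ≤ Fintype.card (Fin (M + 1) × Fin (M + 1)) :=
    card_le_univ _
  omega

theorem permLength_prod_map_adjSwap_le (L : List (Fin M)) :
    permLength (L.map adjSwap).prod ≤ L.length := by
  induction L using List.reverseRecOn with
  | nil => exact permLength_one.le
  | append_singleton L i ih =>
    have := permLength_mul_adjSwap_le (L.map adjSwap).prod i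
    simp only [List.map_append, List.map_singleton, List.prod_append, List.prod_singleton,
      List.length_append, List.length_singleton]
    omega

theorem IsReducedWord.of_append_singleton {L : List (Fin M)} {i : Fin M}
    {v : Perm (Fin (M + 1))} (h : IsReducedWord (L ++ [i]) v) :
    IsReducedWord L (v * adjSwap i) ∧ IsDescent v i := by
  obtain ⟨hprod, hlen⟩ := h
  have hv : (L.map adjSwap).prod = v * adjSwap i := by
    rw [← hprod, List.map_append, List.prod_append, List.map_singleton, List.prod_singleton,
      mul_adjSwap_mul_adjSwap]
  have hle : permLength (v * adjSwap i) ≤ L.length := hv ▸ permLength_prod_map_adjSwap_le L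
  rw [List.length_append, List.length_singleton] at hlen
  have hdesc : IsDescent v i := by
    by_contra hasc
    have := permLength_mul_adjSwap hasc
    omega
  have := hdesc.permLength_mul_adjSwap_add_one
  exact ⟨⟨hv, by omega⟩, hdesc⟩

end Descents

theorem prod_mem_prod_submodule {R A ι : Type*} [CommSemiring R] [CommSemiring A] [Algebra R A]
    {S : ι → Submodule R A} {f : ι → A} (s : Finset ι) (hf : ∀ i ∈ s, f i ∈ S i) :
    ∏ i ∈ s, f i ∈ ∏ i ∈ s, S i := by
  classical
  induction s using Finset.induction_on with
  | empty => exact Submodule.one_le.1 le_rfl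
  | insert a s ha ih =>
    rw [prod_insert ha, prod_insert ha]
    exact Submodule.mul_mem_mul (hf a (mem_insert_self a s))
      (ih fun i hi => hf i (mem_insert_of_mem hi))

open scoped Pointwise in
theorem card_pair_one_pow_le {A : Type*} [Monoid A] [DecidableEq A] (a : A) (k : ℕ) :
    (({1, a} : Finset A) ^ k).card ≤ k + 1 := by
  have hsub : ({1, a} : Finset A) ^ k ⊆ (range (k + 1)).image (a ^ ·) := by
    induction k with
    | zero => simp [← singleton_one]
    | succ k ih =>
      rw [pow_succ]
      refine (mul_subset_mul_right ih).trans ?_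
      simp only [mul_subset_iff, mem_image, mem_range, mem_insert, mem_singleton]
      rintro _ ⟨l, hl, rfl⟩ _ (rfl | rfl)
      · exact ⟨l, by omega, (mul_one _).symm⟩
      · exact ⟨l + 1, by omega, pow_succ _ _⟩
  exact (card_le_card hsub).trans (card_image_le.trans_eq (card_range _))

theorem prod_staircase_add_one_eq_card_perm (M : ℕ) :
    ∏ j : Fin (M + 1), (M - j + 1) = Fintype.card (Perm (Fin (M + 1))) := by
  rw [Fintype.card_perm, Fintype.card_fin, Fin.prod_univ_eq_prod_range (fun j => M - j + 1),
    ← prod_range_add_one_eq_factorial, ← prod_range_reflect]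
  refine prod_congr rfl fun j hj => ?_
  have := mem_range.1 hj
  omega

theorem one_add_mul_ne_zero_of_algebraicIndependent {R A ι : Type*} [CommRing R] [Nontrivial R]
    [CommRing A] [Algebra R A] {v : ι → A} (hv : AlgebraicIndependent R v) (i j : ι) :
    1 + v i * v j ≠ 0 := by
  intro h
  have hpoly : (1 + MvPolynomial.X i * MvPolynomial.X j : MvPolynomial ι R) = 0 :=
    algebraicIndependent_iff.1 hv _ (by simpa using h)
  simpa using congrArg (MvPolynomial.eval 0) hpoly

section DividedDifference

variable [Field F] {ι : Type*}

/-- The `i`-th coordinate, as a function on the points of `F^ι` with pairwise distinct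
coordinates. Divided differences are genuine operators on functions of such points, as their
denominators do not vanish there. -/
def coord (i : ι) : (ι ↪ F) → F := fun x => x i

theorem embedding_sub_ne_zero {a b : ι} (hab : a ≠ b) (x : ι ↪ F) : x a - x b ≠ 0 :=
  sub_ne_zero.2 (x.injective.ne hab)

section Swap

variable [DecidableEq ι]

/-- The action on functions of the exchange of the variables `a` and `b`. -/
def swapVars (a b : ι) : ((ι ↪ F) → F) →ₐ[F] ((ι ↪ F) → F) :=
  AlgHom.pi fun x => Pi.evalAlgHom F (fun _ : ι ↪ F => F) ((swap a b).toEmbedding.trans x)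

theorem swapVars_apply (a b : ι) (f : (ι ↪ F) → F) (x : ι ↪ F) :
    swapVars a b f x = f ((swap a b).toEmbedding.trans x) := rfl

theorem swapVars_coord (a b i : ι) : swapVars a b (coord (F := F) i) = coord (swap a b i) := rfl

theorem swapVars_swapVars (a b : ι) (f : (ι ↪ F) → F) :
    swapVars a b (swapVars a b f) = f := by
  ext x
  refine congrArg f (Function.Embedding.ext fun i => ?_)
  simp

/-- The Newton divided difference in the variables `a` and `b`. -/
def divDiff (a b : ι) : Module.End F ((ι ↪ F) → F) :=
  LinearMap.mulLeft F (coord a - coord b)⁻¹ * (1 - (swapVars a b).toLinearMap)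

/-- The operator `∂^β` in the variables `a` and `b`. -/
def betaDivDiff (β : F) (a b : ι) : Module.End F ((ι ↪ F) → F) :=
  divDiff a b * LinearMap.mulLeft F (1 + β • coord b)

/-- The operator `∂̄^β = ∂^β + β` in the variables `a` and `b`. -/
def betaDivDiffBar (β : F) (a b : ι) : Module.End F ((ι ↪ F) → F) :=
  betaDivDiff β a b + β • 1

theorem divDiff_apply (a b : ι) (f : (ι ↪ F) → F) :
    divDiff a b f = (coord a - coord b)⁻¹ * (f - swapVars a b f) := rfl

theorem divDiff_mul (a b : ι) (f g : (ι ↪ F) → F) :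
    divDiff a b (f * g) = divDiff a b f * g + swapVars a b f * divDiff a b g := by
  simp only [divDiff_apply, map_mul]
  ring

theorem betaDivDiff_apply (β : F) (a b : ι) (f : (ι ↪ F) → F) (x : ι ↪ F) :
    betaDivDiff β a b f x =
      ((1 + β * x b) * f x - (1 + β * x a) * f ((swap a b).toEmbedding.trans x)) /
        (x a - x b) := by
  simp [betaDivDiff, divDiff_apply, swapVars_apply, coord, inv_mul_eq_div]

theorem divDiff_eq_zero {a b : ι} {f : (ι ↪ F) → F} (hf : swapVars a b f = f) :
    divDiff a b f = 0 := by
  rw [divDiff_apply, hf, sub_self, mul_zero]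

theorem divDiff_one (a b : ι) : divDiff a b (1 : (ι ↪ F) → F) = 0 :=
  divDiff_eq_zero (map_one _)

theorem divDiff_coord_left {a b : ι} (hab : a ≠ b) : divDiff a b (coord (F := F) a) = 1 := by
  ext x
  simp [divDiff_apply, swapVars_coord, coord, inv_mul_cancel₀ (embedding_sub_ne_zero hab x)]

theorem divDiff_coord_right {a b : ι} (hab : a ≠ b) : divDiff a b (coord (F := F) b) = -1 := by
  ext x
  have hne := embedding_sub_ne_zero hab x
  simp only [divDiff_apply, swapVars_coord, swap_apply_right, coord, Pi.mul_apply, Pi.inv_apply,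
    Pi.sub_apply, Pi.neg_apply, Pi.one_apply]
  rw [inv_mul_eq_iff_eq_mul₀ hne, mul_neg_one, neg_sub]

theorem swapVars_betaDivDiff (β : F) (a b : ι) (f : (ι ↪ F) → F) :
    swapVars a b (betaDivDiff β a b f) = betaDivDiff β a b f := by
  ext x
  rw [swapVars_apply, betaDivDiff_apply, betaDivDiff_apply, ← swapVars_apply a b f,
    ← swapVars_apply a b f, ← swapVars_apply a b (swapVars a b f), swapVars_swapVars]
  simp only [Function.Embedding.trans_apply, coe_toEmbedding, swap_apply_left, swap_apply_right]
  rw [← neg_sub (x a), div_neg, ← neg_div, neg_sub]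

theorem betaDivDiffBar_eq_zero {a b : ι} (hab : a ≠ b) (β : F) {f : (ι ↪ F) → F}
    (hf : swapVars a b f = f) : betaDivDiffBar β a b f = 0 := by
  ext x
  have hfx : f ((swap a b).toEmbedding.trans x) = f x := congrFun hf x
  have hne := embedding_sub_ne_zero hab x
  simp only [betaDivDiffBar, LinearMap.add_apply, Pi.add_apply, betaDivDiff_apply, hfx,
    LinearMap.smul_apply, Module.End.one_apply, Pi.smul_apply, smul_eq_mul, Pi.zero_apply]
  field_simp
  ring

end Swap

section DegreeBound

/-- The functions `c + d x_i` that are affine in the single variable `x_i`. -/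
def affineIn (F : Type*) [Field F] {ι : Type*} (i : ι) : Submodule F ((ι ↪ F) → F) :=
  Submodule.span F {1, coord i}

theorem smul_one_add_smul_coord_mem_affineIn (c c' : F) (i : ι) :
    c • 1 + c' • coord i ∈ affineIn F i :=
  Submodule.mem_span_pair.2 ⟨c, c', rfl⟩

theorem one_le_affineIn (i : ι) : 1 ≤ affineIn F i :=
  Submodule.one_le.2 (Submodule.subset_span (by simp))

/-- The polynomial functions of degree at most `d i` in each variable `x_i`, encoded as the span of
all products having, for each `i`, `d i` factors that are affine in `x_i`. -/
def degreeBounded (F : Type*) [Field F] {ι : Type*} [Fintype ι] (d : ι → ℕ) :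
    Submodule F ((ι ↪ F) → F) :=
  ∏ i, affineIn F i ^ d i

variable [DecidableEq ι]

theorem map_swapVars_affineIn (a b i : ι) :
    (affineIn F i).map (swapVars a b).toLinearMap = affineIn F (swap a b i) := by
  rw [affineIn, Submodule.map_span, Set.image_pair]
  simp [affineIn, swapVars_coord]

theorem swapVars_mem_affineIn_mul_affineIn {a b : ι} {f : (ι ↪ F) → F}
    (hf : f ∈ affineIn F a * affineIn F b) :
    swapVars a b f ∈ affineIn F a * affineIn F b := by
  have hmap : (affineIn F a * affineIn F b).map (swapVars a b).toLinearMap =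
      affineIn F a * affineIn F b := by
    rw [Submodule.map_mul, map_swapVars_affineIn, map_swapVars_affineIn, swap_apply_left,
      swap_apply_right, mul_comm]
  exact hmap ▸ Submodule.mem_map_of_mem hf

theorem divDiff_mem_one {a b : ι} (hab : a ≠ b) {f : (ι ↪ F) → F}
    (hf : f ∈ affineIn F a * affineIn F b) : divDiff a b f ∈ (1 : Submodule F ((ι ↪ F) → F)) := by
  have hsymm : swapVars a b (coord (F := F) a * coord b) = coord a * coord b := by
    rw [map_mul, swapVars_coord, swapVars_coord, swap_apply_left, swap_apply_right, mul_comm]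
  have hone : (1 : (ι ↪ F) → F) ∈ (1 : Submodule F ((ι ↪ F) → F)) := Submodule.one_le.1 le_rfl
  rw [affineIn, affineIn, Submodule.span_mul_span] at hf
  suffices Submodule.span F _ ≤ (1 : Submodule F ((ι ↪ F) → F)).comap (divDiff a b) from this hf
  rw [Submodule.span_le]
  rintro _ ⟨p, rfl | rfl, q, rfl | rfl, rfl⟩
  · simp [divDiff_one]
  · simpa [divDiff_coord_right hab] using hone
  · simpa [divDiff_coord_left hab] using hone
  · simp [divDiff_eq_zero hsymm]

theorem divDiff_mem_affineIn_mul_affineIn_pow {a b : ι} (hab : a ≠ b) {k : ℕ} {f : (ι ↪ F) → F}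
    (hf : f ∈ (affineIn F a * affineIn F b) ^ (k + 1)) :
    divDiff a b f ∈ (affineIn F a * affineIn F b) ^ k := by
  induction k generalizing f with
  | zero =>
    rw [zero_add, pow_one] at hf
    exact pow_zero (affineIn F a * affineIn F b) ▸ divDiff_mem_one hab hf
  | succ k ih =>
    rw [pow_succ'] at hf
    induction hf using Submodule.mul_induction_on' with
    | mem_mul_mem p hp q hq =>
      rw [divDiff_mul]
      refine add_mem ?_ ?_
      · rw [← one_mul (_ ^ (k + 1))]
        exact Submodule.mul_mem_mul (divDiff_mem_one hab hp) hq
      · rw [pow_succ']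
        exact Submodule.mul_mem_mul (swapVars_mem_affineIn_mul_affineIn hp) (ih hq)
    | add p _ q _ hp hq => exact map_add (divDiff a b) p q ▸ add_mem hp hq

theorem swapVars_eq_self_of_mem_prod {a b : ι} {s : Finset ι} (ha : a ∉ s) (hb : b ∉ s)
    (d : ι → ℕ) {f : (ι ↪ F) → F} (hf : f ∈ ∏ i ∈ s, affineIn F i ^ d i) :
    swapVars a b f = f := by
  let E := AlgHom.equalizer (swapVars (F := F) a b) (AlgHom.id F _)
  suffices ∏ i ∈ s, affineIn F i ^ d i ≤ Subalgebra.toSubmodule E from this hf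
  have hmul : ∀ S T, S ≤ Subalgebra.toSubmodule E → T ≤ Subalgebra.toSubmodule E →
      S * T ≤ Subalgebra.toSubmodule E := fun S T hS hT =>
    (mul_le_mul' hS hT).trans_eq E.isIdempotentElem_toSubmodule
  have hone : 1 ≤ Subalgebra.toSubmodule E := Submodule.one_le.2 E.one_mem
  refine prod_induction _ (· ≤ Subalgebra.toSubmodule E) hmul hone fun i hi => ?_
  have hi_le : affineIn F i ≤ Subalgebra.toSubmodule E := by
    have hia : i ≠ a := fun h => ha (h ▸ hi)
    have hib : i ≠ b := fun h => hb (h ▸ hi)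
    rw [affineIn, Submodule.span_le]
    rintro _ (rfl | rfl)
    · exact E.one_mem
    · exact (swapVars_coord a b i).trans (by rw [swap_apply_of_ne_of_ne hia hib]; rfl)
  rw [← card_range (d i), ← prod_const]
  exact prod_induction _ (· ≤ Subalgebra.toSubmodule E) hmul hone fun _ _ => hi_le

variable [Fintype ι]

theorem degreeBounded_eq_mul_prod_erase {a b : ι} (hab : a ≠ b) (d : ι → ℕ) :
    degreeBounded F d =
      affineIn F a ^ d a * (affineIn F b ^ d b *
        ∏ i ∈ (univ.erase a).erase b, affineIn F i ^ d i) := by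
  rw [mul_prod_erase _ (fun i => affineIn F i ^ d i) (mem_erase.2 ⟨hab.symm, mem_univ b⟩),
    mul_prod_erase _ (fun i => affineIn F i ^ d i) (mem_univ a), degreeBounded]

theorem betaDivDiff_mem_degreeBounded {a b : ι} (hab : a ≠ b) (β : F) {d : ι → ℕ}
    (hd : d a = d b + 1) {f : (ι ↪ F) → F} (hf : f ∈ degreeBounded F d) :
    betaDivDiff β a b f ∈ degreeBounded F d := by
  set Q := affineIn F a * affineIn F b with hQ
  set R := ∏ i ∈ (univ.erase a).erase b, affineIn F i ^ d i
  have hdeg : degreeBounded F d = affineIn F a * (Q ^ d b * R) := by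
    rw [degreeBounded_eq_mul_prod_erase hab, hd, hQ]
    ring
  have hmul : (1 + β • coord b) * f ∈ Q ^ (d b + 1) * R := by
    have hb : 1 + β • coord b ∈ affineIn F b := by
      simpa using smul_one_add_smul_coord_mem_affineIn (1 : F) β b
    have := Submodule.mul_mem_mul hb (hdeg ▸ hf)
    convert this using 1
    rw [hQ]
    ring
  have hdiff : ∀ g ∈ Q ^ (d b + 1) * R, divDiff a b g ∈ Q ^ d b * R := by
    intro g hg
    induction hg using Submodule.mul_induction_on' with
    | mem_mul_mem q hq r hr =>
      have hr_symm : swapVars a b r = r :=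
        swapVars_eq_self_of_mem_prod (by simp) (by simp) d hr
      rw [divDiff_mul, divDiff_eq_zero hr_symm, mul_zero, add_zero]
      exact Submodule.mul_mem_mul (divDiff_mem_affineIn_mul_affineIn_pow hab hq) hr
    | add p _ q _ hp hq => exact map_add (divDiff a b) p q ▸ add_mem hp hq
  rw [hdeg, ← one_mul (betaDivDiff β a b f)]
  exact Submodule.mul_mem_mul (Submodule.one_le.1 (one_le_affineIn a)) (hdiff _ hmul)

end DegreeBound

open scoped Pointwise in
theorem exists_finset_span_eq_degreeBounded [Fintype ι] (d : ι → ℕ) :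
    ∃ t : Finset ((ι ↪ F) → F),
      Submodule.span F (t : Set ((ι ↪ F) → F)) = degreeBounded F d ∧ t.card ≤ ∏ i, (d i + 1) := by
  classical
  refine ⟨∏ i, {1, coord i} ^ d i, ?_, ?_⟩
  · simp only [degreeBounded, affineIn, Submodule.span_pow, Submodule.prod_span, coe_prod,
      coe_pow, coe_pair]
  · exact (le_prod_of_submultiplicative card card_one.le (fun _ _ => card_mul_le) univ _).trans
      (prod_le_prod' fun i _ => card_pair_one_pow_le _ _)

end DividedDifference

section Grothendieck

variable [Field F] {M : ℕ} {β : F}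
  {G : Perm (Fin (M + 1)) → (Fin (M + 1) → F) → (Fin (M + 1) → F) → F}

theorem add_negOm_add_mul_negOm (x : F) {y : F} (hy : 1 + β * y ≠ 0) :
    x + negOm β y + β * x * negOm β y = om β x y := by
  rw [negOm, om, eq_div_iff hy]
  linear_combination (1 + β * x) * div_mul_cancel₀ (-y) hy

/-- The restriction of a function to the points with pairwise distinct coordinates. -/
def onDistinct {ι : Type*} (f : (ι → F) → F) : (ι ↪ F) → F := fun x => f x

/-- The operator `∂̄^β_{i_1} ⋯ ∂̄^β_{i_ℓ}` of a word `[i_1, …, i_ℓ]`, on functions of points with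
pairwise distinct coordinates. -/
def barWord (β : F) (L : List (Fin M)) : Module.End F ((Fin (M + 1) ↪ F) → F) :=
  (L.map fun i => betaDivDiffBar β i.castSucc i.succ).prod

theorem barWord_append_singleton (L : List (Fin M)) (i : Fin M) (f : (Fin (M + 1) ↪ F) → F) :
    barWord β (L ++ [i]) f = barWord β L (betaDivDiffBar β i.castSucc i.succ f) := by
  simp [barWord]

theorem onDistinct_ddbarWord (L : List (Fin M)) (f : (Fin (M + 1) → F) → F) :
    onDistinct (ddbarWord β L f) = barWord β L (onDistinct f) := by
  induction L with
  | nil => rfl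
  | cons i L ih =>
    have hcons : barWord β (i :: L) (onDistinct f) =
        betaDivDiffBar β i.castSucc i.succ (barWord β L (onDistinct f)) := by
      simp [barWord]
    rw [hcons, ← ih]
    ext x
    exact congrArg (· + _) (betaDivDiff_apply β _ _ (onDistinct (ddbarWord β L f)) x).symm

namespace IsGroth

theorem apply_mul_adjSwap (hG : IsGroth M β G) {w : Perm (Fin (M + 1))} {i : Fin M}
    (h : IsDescent w i) {x : Fin (M + 1) → F} (hx : Function.Injective x) (y : Fin (M + 1) → F) :
    G (w * adjSwap i) x y =
      ((1 + β * x i.succ) * G w x y - (1 + β * x i.castSucc) * G w (x ∘ adjSwap i) y) /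
        (x i.castSucc - x i.succ) :=
  hG.2 w i x y h.permLength_mul_adjSwap_add_one (hx.ne i.castSucc_lt_succ.ne)

theorem onDistinct_mul_adjSwap (hG : IsGroth M β G) {w : Perm (Fin (M + 1))} {i : Fin M}
    (h : IsDescent w i) (y : Fin (M + 1) → F) :
    onDistinct (G (w * adjSwap i) · y) =
      betaDivDiff β i.castSucc i.succ (onDistinct (G w · y)) := by
  ext x
  rw [betaDivDiff_apply]
  exact hG.apply_mul_adjSwap h x.injective y

theorem betaDivDiffBar_of_isDescent (hG : IsGroth M β G) {w : Perm (Fin (M + 1))} {i : Fin M}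
    (h : IsDescent w i) (y : Fin (M + 1) → F) :
    betaDivDiffBar β i.castSucc i.succ (onDistinct (G w · y)) =
      onDistinct (G (w * adjSwap i) · y) + β • onDistinct (G w · y) := by
  rw [hG.onDistinct_mul_adjSwap h]
  rfl

theorem betaDivDiffBar_of_not_isDescent (hG : IsGroth M β G) {w : Perm (Fin (M + 1))} {i : Fin M}
    (h : ¬ IsDescent w i) (y : Fin (M + 1) → F) :
    betaDivDiffBar β i.castSucc i.succ (onDistinct (G w · y)) = 0 := by
  have hw := hG.onDistinct_mul_adjSwap (isDescent_mul_adjSwap.2 h) y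
  rw [mul_adjSwap_mul_adjSwap] at hw
  rw [hw]
  exact betaDivDiffBar_eq_zero i.castSucc_lt_succ.ne β (swapVars_betaDivDiff ..)

theorem onDistinct_omegaPerm (hG : IsGroth M β G) (y : Fin (M + 1) → F) :
    onDistinct (G (omegaPerm (M + 1)) · y) =
      ∏ i : Fin (M + 1), ∏ j ∈ Iio (⟨M - i, by omega⟩ : Fin (M + 1)),
        (y j • 1 + (1 + β * y j) • coord i) := by
  ext x
  have hfilter (i : Fin (M + 1)) :
      univ.filter (fun j : Fin (M + 1) => (i : ℕ) + j + 2 ≤ M + 1) =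
        Iio (⟨M - i, by omega⟩ : Fin (M + 1)) := by
    ext j
    simp only [mem_filter_univ, mem_Iio, Fin.lt_def]
    omega
  simp only [onDistinct, hG.1, prod_filter, Fintype.prod_prod_type]
  simp only [← prod_filter, hfilter, Finset.prod_apply, Pi.add_apply, Pi.smul_apply,
    Pi.one_apply, smul_eq_mul, coord]
  exact prod_congr rfl fun i _ => prod_congr rfl fun j _ => by ring

theorem onDistinct_mem_degreeBounded (hG : IsGroth M β G) (w : Perm (Fin (M + 1)))
    (y : Fin (M + 1) → F) :
    onDistinct (G w · y) ∈ degreeBounded F fun j : Fin (M + 1) => M - j := by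
  induction w using perm_induction_from_omegaPerm with
  | omega =>
    rw [hG.onDistinct_omegaPerm, degreeBounded]
    refine prod_mem_prod_submodule _ fun i _ => ?_
    have hpow : affineIn F i ^ (M - i : ℕ) =
        ∏ _j ∈ Iio (⟨M - i, by omega⟩ : Fin (M + 1)), affineIn F i := by
      rw [prod_const, Fin.card_Iio]
    rw [hpow]
    exact prod_mem_prod_submodule _ fun j _ => smul_one_add_smul_coord_mem_affineIn (y j) _ i
  | mul_adjSwap w i hw ih =>
    rw [hG.onDistinct_mul_adjSwap hw]
    refine betaDivDiff_mem_degreeBounded i.castSucc_lt_succ.ne β ?_ ih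
    simp only [Fin.val_castSucc, Fin.val_succ]
    omega

section Localization

variable {z : Fin (M + 1) → F}

theorem omegaPerm_apply_comp_eq_zero (hG : IsGroth M β G) (hβz : ∀ j, 1 + β * z j ≠ 0)
    {u : Perm (Fin (M + 1))} (hu : u ≠ omegaPerm (M + 1)) :
    G (omegaPerm (M + 1)) (z ∘ u) (negOm β ∘ z) = 0 := by
  obtain ⟨j, hj⟩ : ∃ j : Fin (M + 1), (u j : ℕ) + j < M := by
    by_contra! hle
    exact hu (eq_omegaPerm_of_forall_le_add hle)
  rw [hG.1]
  refine prod_eq_zero (i := (j, u j)) (mem_filter.2 ⟨mem_univ _, by dsimp only; omega⟩) ?_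
  rw [Function.comp_apply, Function.comp_apply, add_negOm_add_mul_negOm _ (hβz _), om, sub_self,
    zero_div]

theorem apply_comp_eq_zero (hG : IsGroth M β G) (hz : Function.Injective z)
    (hβz : ∀ j, 1 + β * z j ≠ 0) {u w : Perm (Fin (M + 1))}
    (hlen : permLength u ≤ permLength w) (huw : u ≠ w) :
    G w (z ∘ u) (negOm β ∘ z) = 0 := by
  induction w using perm_induction_from_omegaPerm generalizing u with
  | omega => exact hG.omegaPerm_apply_comp_eq_zero hβz huw
  | mul_adjSwap w i hw ih =>
    have hw_len := hw.permLength_mul_adjSwap_add_one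
    have hu_len := permLength_mul_adjSwap_le u i
    have hu : G w (z ∘ u) (negOm β ∘ z) = 0 := ih (u := u) (by omega) (by rintro rfl; omega)
    have hus : G w (z ∘ ⇑(u * adjSwap i)) (negOm β ∘ z) = 0 :=
      ih (u := u * adjSwap i) (by omega) fun h => huw (by rw [← h, mul_adjSwap_mul_adjSwap])
    rw [Perm.coe_mul, ← Function.comp_assoc] at hus
    rw [hG.apply_mul_adjSwap hw (hz.comp u.injective), hu, hus, mul_zero, mul_zero, sub_zero,
      zero_div]

theorem apply_comp_self (hG : IsGroth M β G) (hz : Function.Injective z)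
    (hβz : ∀ j, 1 + β * z j ≠ 0) (w : Perm (Fin (M + 1))) :
    G w (z ∘ w) (negOm β ∘ z) = ∏ p ∈ valueInversions w, om β (z p.2) (z p.1) := by
  induction w using perm_induction_from_omegaPerm with
  | omega =>
    rw [hG.1]
    refine prod_bij' (fun p _ => (p.2, p.1.rev)) (fun p _ => (p.2.rev, p.1)) ?_ ?_ ?_ ?_
      fun p _ => add_negOm_add_mul_negOm _ (hβz p.2)
    · simp only [mem_filter_univ, mem_valueInversions_omegaPerm, Fin.lt_def, Fin.val_rev]
      omega
    · simp only [mem_filter_univ, mem_valueInversions_omegaPerm, Fin.lt_def, Fin.val_rev]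
      omega
    · simp
    · simp
  | mul_adjSwap w i hw ih =>
    have hlen := hw.permLength_mul_adjSwap_add_one
    have hws : G w (z ∘ ⇑(w * adjSwap i)) (negOm β ∘ z) = 0 :=
      hG.apply_comp_eq_zero (u := w * adjSwap i) hz hβz (by omega) fun h => by
        rw [h] at hlen
        omega
    have hinv := valueInversions_mul_adjSwap (mt isDescent_mul_adjSwap.1 (not_not.2 hw))
    rw [mul_adjSwap_mul_adjSwap] at hinv
    rw [hinv, prod_insert (notMem_valueInversions _ i)] at ih
    rw [hG.apply_mul_adjSwap hw (hz.comp (w * adjSwap i).injective), hws, Function.comp_assoc,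
      ← Perm.coe_mul, mul_adjSwap_mul_adjSwap, ih]
    have hne : z (w i.succ) - z (w i.castSucc) ≠ 0 :=
      sub_ne_zero.2 (hz.ne (w.injective.ne i.castSucc_lt_succ.ne'))
    have := hβz (w i.succ)
    simp only [Function.comp_apply, Perm.mul_apply, swap_apply_left, swap_apply_right, om]
    field_simp
    ring

theorem apply_self_negOm (hG : IsGroth M β G) (hz : Function.Injective z)
    (hβz : ∀ j, 1 + β * z j ≠ 0) (w : Perm (Fin (M + 1))) :
    G w z (negOm β ∘ z) = if w = 1 then 1 else 0 := by
  split_ifs with hw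
  · simpa [hw, valueInversions_one] using hG.apply_comp_self hz hβz 1
  · simpa using hG.apply_comp_eq_zero hz hβz (permLength_one.trans_le zero_le) (Ne.symm hw)

end Localization

section Duality

variable {z : Fin (M + 1) ↪ F}

theorem barWord_apply (hG : IsGroth M β G) (hβz : ∀ j, 1 + β * z j ≠ 0) {L : List (Fin M)}
    {v : Perm (Fin (M + 1))} (hL : IsReducedWord L v) (w : Perm (Fin (M + 1))) :
    barWord β L (onDistinct (G w · (negOm β ∘ z))) z = if w = v then 1 else 0 := by
  induction L using List.reverseRecOn generalizing v w with
  | nil =>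
    rw [← show 1 = v from hL.1]
    exact hG.apply_self_negOm z.injective hβz w
  | append_singleton L i ih =>
    obtain ⟨hL', hv⟩ := hL.of_append_singleton
    rw [barWord_append_singleton]
    by_cases hw : IsDescent w i
    · have hne : w ≠ v * adjSwap i := fun h => isDescent_mul_adjSwap.1 (h ▸ hw) hv
      rw [hG.betaDivDiffBar_of_isDescent hw, map_add, map_smul, Pi.add_apply, Pi.smul_apply,
        ih hL', ih hL', if_neg hne, smul_zero, add_zero]
      simp only [mul_left_inj]
    · have hne : w ≠ v := fun h => hw (h ▸ hv)
      rw [hG.betaDivDiffBar_of_not_isDescent hw, map_zero, Pi.zero_apply, if_neg hne]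

theorem barWord_sum_smul_apply (hG : IsGroth M β G) (hβz : ∀ j, 1 + β * z j ≠ 0)
    {L : List (Fin M)} {v : Perm (Fin (M + 1))} (hL : IsReducedWord L v)
    (c : Perm (Fin (M + 1)) → F) :
    barWord β L (∑ w, c w • onDistinct (G w · (negOm β ∘ z))) z = c v := by
  simp [map_sum, hG.barWord_apply hβz hL]

variable {L : Perm (Fin (M + 1)) → List (Fin M)}

theorem linearIndependent (hG : IsGroth M β G) (hβz : ∀ j, 1 + β * z j ≠ 0)
    (hL : ∀ v, IsReducedWord (L v) v) :
    LinearIndependent F fun w => onDistinct (G w · (negOm β ∘ z)) := by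
  refine Fintype.linearIndependent_iff.2 fun c hc v => ?_
  rw [← hG.barWord_sum_smul_apply hβz (hL v) c, hc, map_zero, Pi.zero_apply]

theorem span_eq_degreeBounded (hG : IsGroth M β G) (hβz : ∀ j, 1 + β * z j ≠ 0)
    (hL : ∀ v, IsReducedWord (L v) v) :
    Submodule.span F (Set.range fun w => onDistinct (G w · (negOm β ∘ z))) =
      degreeBounded F fun j : Fin (M + 1) => M - j := by
  obtain ⟨t, ht_span, ht_card⟩ :=
    exists_finset_span_eq_degreeBounded (F := F) fun j : Fin (M + 1) => M - j
  have hfin : FiniteDimensional F (degreeBounded F fun j : Fin (M + 1) => M - j) :=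
    ht_span ▸ FiniteDimensional.span_finset F t
  refine Submodule.eq_of_le_of_finrank_le (Submodule.span_le.2 ?_) ?_
  · rintro _ ⟨w, rfl⟩
    exact hG.onDistinct_mem_degreeBounded w _
  · rw [finrank_span_eq_card (hG.linearIndependent hβz hL), ← ht_span,
      ← prod_staircase_add_one_eq_card_perm]
    exact (finrank_span_finset_le_card t).trans ht_card

theorem eq_sum_barWord_smul (hG : IsGroth M β G) (hβz : ∀ j, 1 + β * z j ≠ 0)
    (hL : ∀ v, IsReducedWord (L v) v) {f : (Fin (M + 1) ↪ F) → F}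
    (hf : f ∈ degreeBounded F fun j : Fin (M + 1) => M - j) :
    f = ∑ v, barWord β (L v) f z • onDistinct (G v · (negOm β ∘ z)) := by
  rw [← hG.span_eq_degreeBounded hβz hL, Submodule.mem_span_range_iff_exists_fun] at hf
  obtain ⟨c, rfl⟩ := hf
  simp only [hG.barWord_sum_smul_apply hβz (hL _)]

end Duality

end IsGroth

end Grothendieck

theorem cauchy_identity_general [Field F] (M : ℕ) (β : F) (x z y : Fin (M + 1) → F)
    (hx : Function.Injective x) (hz : Function.Injective z) (hβz : ∀ j, 1 + β * z j ≠ 0)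
    (G : Perm (Fin (M + 1)) → (Fin (M + 1) → F) → (Fin (M + 1) → F) → F) (hG : IsGroth M β G)
    (L : Perm (Fin (M + 1)) → List (Fin M)) (hL : ∀ v, IsReducedWord (L v) v)
    (w : Perm (Fin (M + 1))) :
    G w x y =
      ∑ v, G v x (fun j => negOm β (z j)) * ddbarWord β (L v) (fun z' => G w z' y) z := by
  have hexp := hG.eq_sum_barWord_smul (z := ⟨z, hz⟩) hβz hL (hG.onDistinct_mem_degreeBounded w y)
  have hexp_x := congrFun hexp ⟨x, hx⟩
  simp only [← onDistinct_ddbarWord, Finset.sum_apply, Pi.smul_apply, smul_eq_mul] at hexp_x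
  exact hexp_x.trans (sum_congr rfl fun v _ => mul_comm _ _)

/-- **Cauchy-type identity** (Theorem `cauchy`): for any `w ∈ S_n` (`n = M+1`),
`G^β_w(x; ⊖t) = ∑_{v ∈ S_n} G^β_v(x; ⊖z) · ∂̄^β_v G^β_w(z; ⊖t)`,
where `∂̄^β_v` (given by any reduced word of `v`) acts on the `z`-variables. -/
theorem cauchy_identity [Field F] [CharZero F] (M : ℕ) (β : F)
    (x z t : Fin (M + 1) → F)
    (hind : AlgebraicIndependent ℚ
      (Sum.elim (fun _ : Unit => β) (Sum.elim x (Sum.elim z t))))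
    (G : Equiv.Perm (Fin (M + 1)) → (Fin (M + 1) → F) → (Fin (M + 1) → F) → F)
    (hG : IsGroth M β G)
    (L : Equiv.Perm (Fin (M + 1)) → List (Fin M))
    (hL : ∀ v, IsReducedWord (L v) v)
    (w : Equiv.Perm (Fin (M + 1))) :
    G w x (fun j => negOm β (t j)) =
      ∑ v : Equiv.Perm (Fin (M + 1)),
        G v x (fun j => negOm β (z j)) *
          ddbarWord β (L v) (fun z' => G w z' fun j => negOm β (t j)) z :=
  cauchy_identity_general M β x z _
    (hind.injective.comp (Sum.inr_injective.comp Sum.inl_injective))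
    (hind.injective.comp (Sum.inr_injective.comp (Sum.inr_injective.comp Sum.inl_injective)))
    (fun j => one_add_mul_ne_zero_of_algebraicIndependent hind (.inl ()) (.inr (.inr (.inl j))))
    G hG L hL w
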